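/- Let r > 0 and μ > 0 be real numbers with r ≠ μ. The preemptive LCFS M/M/1/2* peak-age-of-information density Φ_L is nonnegative on [0, ∞): for every a ≥ 0, Φ_L(a) ≥ 0. -/

import Mathlib

noncomputable def PhiF (r μ a : ℝ) : ℝ :=
  (μ / (r - μ))^2 * r *
    (Real.exp (-r * a) - Real.exp (-μ * a) + (r - μ) * a * Real.exp (-μ * a)) *
    (μ / (r + μ)) +
  (1/2) * a^2 * μ^3 * Real.exp (-μ * a) * (r / (r + μ))

noncomputable def phiF (r μ a : ℝ) : ℝ :=
  1 - (μ^3 / ((r - μ)^2 * (r + μ))) * Real.exp (-r * a) -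
    (r / (2 * (r - μ)^2 * (r + μ))) * Real.exp (-μ * a) *
      (μ^2 * a^2 * (r - μ)^2 + 2 * r * μ * (r - μ) * a + 2 * (r^2 - r * μ - μ^2))

noncomputable def PhiL (r μ a : ℝ) : ℝ :=
  ((r * (r + μ) * a - (2 * μ^3 - r^3 - r^2 * μ) / (μ * (r - μ))) * Real.exp (-(r + μ) * a) +
    ((r * μ + 2 * μ^2) / (r - μ)) * Real.exp (-μ * a) -
    ((r * μ * (r + μ) + r^3) / (μ * (r - μ))) * Real.exp (-r * a)) * (μ / (r + μ)) +
  (μ^2 / r^2) *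
    (Real.exp (-(r + μ) * a) * (3 * μ + 2 * r + r * (r + μ) * a) -
      Real.exp (-μ * a) * (3 * μ + 2 * r - r * (r + 2 * μ) * a)) * (r / (r + μ))

/-!
Conditioning on whether a departing packet leaves the system idle (probability `μ / (r + μ)`) or
leaves a packet waiting (probability `r / (r + μ)`), the peak age is `Y + Exp(r)` in the first case
and `Y + Exp(μ)` in the second, with the same law for `Y` in both. Hence `Φ_L` is a mixture of two
convolutions of exponential densities with the density of `Y`, and that density is nonnegative
because `1 + r t ≤ exp (r t)`.
-/

open Set intervalIntegral

/-- The convolution of the exponential density of rate `c` with `h`, both supported on `[0, ∞)`, at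
`a ≥ 0`: the density of `X + Y` for independent `X ∼ Exp(c)` and `Y` with density `h`. -/
noncomputable def expConv (c : ℝ) (h : ℝ → ℝ) (a : ℝ) : ℝ :=
  ∫ t in 0..a, c * Real.exp (-c * (a - t)) * h t

theorem expConv_nonneg {c a : ℝ} {h : ℝ → ℝ} (hc : 0 ≤ c) (ha : 0 ≤ a)
    (hh : ∀ t ∈ Icc 0 a, 0 ≤ h t) : 0 ≤ expConv c h a :=
  integral_nonneg ha fun t ht => mul_nonneg (by positivity) (hh t ht)

theorem expConv_eq_of_hasDerivAt {c : ℝ} {h F : ℝ → ℝ} (hh : Continuous h)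
    (hF : ∀ t, HasDerivAt F (c * Real.exp (c * t) * h t) t) (a : ℝ) :
    expConv c h a = Real.exp (-c * a) * (F a - F 0) := by
  have factor (t : ℝ) : c * Real.exp (-c * (a - t)) * h t =
      Real.exp (-c * a) * (c * Real.exp (c * t) * h t) := by
    rw [show -c * (a - t) = -c * a + c * t by ring, Real.exp_add]
    ring
  have integral_F : ∫ t in 0..a, c * Real.exp (c * t) * h t = F a - F 0 :=
    integral_eq_sub_of_hasDerivAt (fun t _ => hF t)
      (Continuous.intervalIntegrable (by fun_prop) 0 a)
  simp only [expConv, factor, integral_const_mul, integral_F]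

theorem hasDerivAt_exp_const_mul (k t : ℝ) :
    HasDerivAt (fun t => Real.exp (k * t)) (k * Real.exp (k * t)) t := by
  simpa [mul_comm] using ((hasDerivAt_id t).const_mul k).exp

theorem hasDerivAt_affine_mul_exp (α β k t : ℝ) :
    HasDerivAt (fun t => (α * t + β) * Real.exp (k * t))
      ((α + k * (α * t + β)) * Real.exp (k * t)) t := by
  have affine : HasDerivAt (fun t => α * t + β) α t := by
    simpa using ((hasDerivAt_id t).const_mul α).add_const β
  exact (affine.mul (hasDerivAt_exp_const_mul k t)).congr_deriv (by ring)

/-- The density on `[0, ∞)` of the system time of a delivered packet, given that another packet is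
waiting when it departs: the law of `W + Exp(r + μ) + Exp(μ)` with independent terms, where the
waiting time `W` is `0` with probability `μ / (r + μ)` and `Exp(r + μ)` otherwise. Given instead
that the system is left idle, it is the density of the system time plus the next service time. -/
noncomputable def busySystemTimeDensity (r μ t : ℝ) : ℝ :=
  μ / r * ((r + 2 * μ) * (Real.exp (-μ * t) - Real.exp (-(r + μ) * t)) -
    r * (r + μ) * t * Real.exp (-(r + μ) * t))

theorem continuous_busySystemTimeDensity (r μ : ℝ) : Continuous (busySystemTimeDensity r μ) := by
  unfold busySystemTimeDensity
  fun_prop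

theorem busySystemTimeDensity_nonneg {r μ t : ℝ} (hr : 0 ≤ r) (hμ : 0 ≤ μ) (ht : 0 ≤ t) :
    0 ≤ busySystemTimeDensity r μ t := by
  have exp_split : Real.exp (-μ * t) = Real.exp (r * t) * Real.exp (-(r + μ) * t) := by
    rw [← Real.exp_add]
    ring_nf
  have bracket_nonneg : 0 ≤ (r + 2 * μ) * (Real.exp (r * t) - 1) - r * (r + μ) * t :=
    calc
      0 ≤ (r + 2 * μ) * (r * t) - r * (r + μ) * t := by
        ring_nf
        positivity
      _ ≤ (r + 2 * μ) * (Real.exp (r * t) - 1) - r * (r + μ) * t := by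
        gcongr
        exact le_sub_iff_add_le.2 (Real.add_one_le_exp _)
  calc
    0 ≤ μ / r * (((r + 2 * μ) * (Real.exp (r * t) - 1) - r * (r + μ) * t) *
        Real.exp (-(r + μ) * t)) := by positivity
    _ = busySystemTimeDensity r μ t := by
      rw [busySystemTimeDensity, exp_split]
      ring

theorem expConv_arrivalRate_busySystemTimeDensity {r μ : ℝ} (hr : r ≠ 0) (hμ : μ ≠ 0)
    (hne : r ≠ μ) (a : ℝ) :
    expConv r (busySystemTimeDensity r μ) a =
      (r * (r + μ) * a - (2 * μ^3 - r^3 - r^2 * μ) / (μ * (r - μ))) * Real.exp (-(r + μ) * a) +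
        ((r * μ + 2 * μ^2) / (r - μ)) * Real.exp (-μ * a) -
        ((r * μ * (r + μ) + r^3) / (μ * (r - μ))) * Real.exp (-r * a) := by
  have hsub : r - μ ≠ 0 := sub_ne_zero.2 hne
  have antideriv (t : ℝ) : HasDerivAt
      (fun t => (r * (r + μ) * t + (r^2 + 2 * r * μ + 2 * μ^2) / μ) * Real.exp (-μ * t) +
        (r * μ + 2 * μ^2) / (r - μ) * Real.exp ((r - μ) * t))
      (r * Real.exp (r * t) * busySystemTimeDensity r μ t) t := by
    refine ((hasDerivAt_affine_mul_exp _ _ _ t).add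
      ((hasDerivAt_exp_const_mul _ t).const_mul _)).congr_deriv ?_
    simp only [busySystemTimeDensity, neg_mul, add_mul, sub_mul, neg_add, Real.exp_add,
      Real.exp_sub, Real.exp_neg]
    field_simp
    ring
  rw [expConv_eq_of_hasDerivAt (continuous_busySystemTimeDensity r μ) antideriv]
  simp only [mul_zero, Real.exp_zero, neg_mul, add_mul, sub_mul, neg_add, Real.exp_add,
    Real.exp_sub, Real.exp_neg]
  field_simp
  ring

theorem expConv_serviceRate_busySystemTimeDensity {r : ℝ} (hr : r ≠ 0) (μ a : ℝ) :
    expConv μ (busySystemTimeDensity r μ) a =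
      (μ^2 / r^2) *
        (Real.exp (-(r + μ) * a) * (3 * μ + 2 * r + r * (r + μ) * a) -
          Real.exp (-μ * a) * (3 * μ + 2 * r - r * (r + 2 * μ) * a)) := by
  have antideriv (t : ℝ) : HasDerivAt
      (fun t => μ^2 / r^2 * ((r * (r + μ) * t + (3 * μ + 2 * r)) * Real.exp (-r * t) +
        r * (r + 2 * μ) * t))
      (μ * Real.exp (μ * t) * busySystemTimeDensity r μ t) t := by
    refine (((hasDerivAt_affine_mul_exp _ _ _ t).add
      ((hasDerivAt_id' t).const_mul _)).const_mul _).congr_deriv ?_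
    simp only [busySystemTimeDensity, neg_mul, add_mul, neg_add, Real.exp_add, Real.exp_neg]
    field_simp
    ring
  rw [expConv_eq_of_hasDerivAt (continuous_busySystemTimeDensity r μ) antideriv]
  have exp_add : Real.exp (-(r + μ) * a) = Real.exp (-r * a) * Real.exp (-μ * a) := by
    rw [← Real.exp_add]
    ring_nf
  simp only [exp_add, mul_zero, Real.exp_zero]
  ring

theorem PhiL_eq_mixture_expConv {r μ : ℝ} (hr : r ≠ 0) (hμ : μ ≠ 0) (hne : r ≠ μ) (a : ℝ) :
    PhiL r μ a =
      expConv r (busySystemTimeDensity r μ) a * (μ / (r + μ)) +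
        expConv μ (busySystemTimeDensity r μ) a * (r / (r + μ)) := by
  rw [PhiL, expConv_arrivalRate_busySystemTimeDensity hr hμ hne,
    expConv_serviceRate_busySystemTimeDensity hr]

theorem PhiL_nonneg (r μ : ℝ) (hr : 0 < r) (hμ : 0 < μ) (hne : r ≠ μ) :
    ∀ a : ℝ, 0 ≤ a → 0 ≤ PhiL r μ a := by
  intro a ha
  have density_nonneg : ∀ t ∈ Icc 0 a, 0 ≤ busySystemTimeDensity r μ t :=
    fun t ht => busySystemTimeDensity_nonneg hr.le hμ.le ht.1
  have idle_nonneg := expConv_nonneg hr.le ha density_nonneg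
  have busy_nonneg := expConv_nonneg hμ.le ha density_nonneg
  rw [PhiL_eq_mixture_expConv hr.ne' hμ.ne' hne]
  positivity
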